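/- Let {G_n} be a sequence of finite graphs, each with non-empty edge set, and let μ be an s-graphon. Then the following are equivalent: (1) for every k ∈ ℕ, the k-shapes C(μ_{Ã_{G_n}}, k) converge to C(μ,k) in the Vietoris topology on compact subsets of ℝ^{k×k} (i.e. {G_n} is s-convergent to μ); (2) the shapes C(G_n) := C(μ_{Ã_{G_n}}) converge to C(μ) in the Vietoris topology on the hyperspace of compact subsets of the space of s-graphons. -/

import Mathlib

open MeasureTheory Topology Filter

noncomputable section

/-- The unit square `[0,1]²`. -/
abbrev Sq : Type := unitInterval × unitInterval

/-- Convergence of a sequence of subsets in the Vietoris topology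
(upper + lower Vietoris convergence). -/
def VietorisTendsto {X : Type*} [TopologicalSpace X] (A : ℕ → Set X) (B : Set X) : Prop :=
  (∀ U : Set X, IsOpen U → B ⊆ U → ∀ᶠ n in atTop, A n ⊆ U) ∧
  (∀ U : Set X, IsOpen U → (B ∩ U).Nonempty → ∀ᶠ n in atTop, (A n ∩ U).Nonempty)

/-- A measure on the unit square is symmetric if it is invariant under the coordinate swap. -/
def IsSymmSq (μ : Measure Sq) : Prop := μ.map Prod.swap = μ

/-- s-graphons: symmetric Borel probability measures on the unit square,
with the weak topology. -/
def SGraphon : Type := {μ : ProbabilityMeasure Sq // IsSymmSq (μ : Measure Sq)}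

instance : TopologicalSpace SGraphon :=
  inferInstanceAs (TopologicalSpace {μ : ProbabilityMeasure Sq // IsSymmSq (μ : Measure Sq)})

/-- The underlying measure of an s-graphon. -/
def SGraphon.toMeasure (μ : SGraphon) : Measure Sq := (μ.1 : Measure Sq)

/-- A non-negative bounded Borel function on the unit square is fairly distributed
if all its horizontal and vertical sections integrate (w.r.t. Lebesgue measure) to 1. -/
structure FairlyDistributed (f : Sq → ℝ) : Prop where
  measurable : Measurable f
  nonneg : ∀ p, 0 ≤ f p
  bounded : ∃ C : ℝ, ∀ p, f p ≤ C
  row : ∀ x : unitInterval, ∫ v, f (x, v) = 1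
  col : ∀ y : unitInterval, ∫ u, f (u, y) = 1

/-- The density `φ(f,μ)`. -/
def phiFn (f : Sq → ℝ) (μ : Measure Sq) (p : Sq) : ℝ :=
  ∫ q, f (q.1, p.1) * f (q.2, p.2) ∂μ

/-- The measure `Φ(f,μ)`, with density `φ(f,μ)` w.r.t. 2-dimensional Lebesgue measure. -/
def PhiMeas (f : Sq → ℝ) (μ : Measure Sq) : Measure Sq :=
  volume.withDensity fun p => ENNReal.ofReal (phiFn f μ p)

/-- The shape of a measure `μ` on the unit square: the weak closure of the set of
(s-graphons corresponding to) the measures `Φ(f,μ)`, `f` continuous fairly distributed. -/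
def shapeM (μ : Measure Sq) : Set SGraphon :=
  closure {ν : SGraphon | ∃ f : Sq → ℝ, FairlyDistributed f ∧ Continuous f ∧
    ν.toMeasure = PhiMeas f μ}

/-- The shape `C(μ)` of an s-graphon. -/
def shape (μ : SGraphon) : Set SGraphon := shapeM μ.toMeasure

/-- A fractional partition into `k` parts: non-negative Borel functions on `[0,1]`
summing to the constant function 1, each integrating to `1/k`. -/
def IsFracPartition (k : ℕ) (f : Fin k → unitInterval → ℝ) : Prop :=
  (∀ i, Measurable (f i)) ∧ (∀ i x, 0 ≤ f i x) ∧ (∀ x, ∑ i, f i x = 1) ∧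
    ∀ i, ∫ x, f i x = 1 / k

/-- The `k`-shape `C(μ,k)`: the closure in `ℝ^{k×k}` of the set of density matrices of
fractional partitions into `k` parts. -/
def kShape (μ : Measure Sq) (k : ℕ) : Set (Matrix (Fin k) (Fin k) ℝ) :=
  closure {M | ∃ f : Fin k → unitInterval → ℝ, IsFracPartition k f ∧
    ∀ i j, M i j = ∫ p, f i p.1 * f j p.2 ∂μ}

/-- `M_k^*`: symmetric `k×k` matrices with non-negative entries summing to 1. -/
def Mstar (k : ℕ) : Set (Matrix (Fin k) (Fin k) ℝ) :=
  {M | M.IsSymm ∧ (∀ i j, 0 ≤ M i j) ∧ ∑ i, ∑ j, M i j = 1}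

/-- The index `i` (0-based) with `u ∈ [i/k, (i+1)/k)` (and `i = k-1` for `u = 1`). -/
def gridIdx (k : ℕ) (hk : 0 < k) (u : unitInterval) : Fin k :=
  ⟨min ⌊(u : ℝ) * k⌋₊ (k - 1), lt_of_le_of_lt (min_le_right _ _) (Nat.sub_lt hk one_pos)⟩

/-- The measure `μ_M` associated to a `k×k` matrix `M`: its density w.r.t. 2-dimensional
Lebesgue measure equals `k² M(i,j)` on the square `[i/k,(i+1)/k) × [j/k,(j+1)/k)` (0-based). -/
def muM {k : ℕ} (M : Matrix (Fin k) (Fin k) ℝ) : Measure Sq :=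
  if hk : 0 < k then
    volume.withDensity fun p =>
      ENNReal.ofReal ((k : ℝ) ^ 2 * M (gridIdx k hk p.1) (gridIdx k hk p.2))
  else 0

/-- `C̃(μ,k)`: the `k`-shape of `μ`, interpreted as a set of s-graphons. -/
def kShapeTilde (μ : Measure Sq) (k : ℕ) : Set SGraphon :=
  {ν : SGraphon | ∃ M ∈ kShape μ k, ν.toMeasure = muM M}

/-- The interval `I_i = [i/k, (i+1)/k)` (0-based), with `I_{k-1} = [(k-1)/k, 1]`,
as a subset of `[0,1]`. -/
def Ik (k : ℕ) (i : Fin k) : Set unitInterval :=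
  if (i : ℕ) + 1 = k then Subtype.val ⁻¹' Set.Icc (((i : ℕ) : ℝ) / k) 1
  else Subtype.val ⁻¹' Set.Ico (((i : ℕ) : ℝ) / k) ((((i : ℕ) : ℝ) + 1) / k)

open scoped Classical in
/-- The adjacency matrix of a finite graph, with real entries. -/
def adjMat {m : ℕ} (G : SimpleGraph (Fin m)) : Matrix (Fin m) (Fin m) ℝ :=
  fun i j => if G.Adj i j then 1 else 0

/-- The adjacency matrix normalized by its `ℓ¹`-norm (the sum of its entries). -/
def normAdj {m : ℕ} (G : SimpleGraph (Fin m)) : Matrix (Fin m) (Fin m) ℝ :=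
  (∑ i, ∑ j, adjMat G i j)⁻¹ • adjMat G


/-- The measure with density `q`. -/
def dens (q : Sq → ℝ) : Measure Sq := volume.withDensity fun p => ENNReal.ofReal (q p)

lemma dens_integral {q : Sq → ℝ} (hq : Measurable q) (h0 : ∀ p, 0 ≤ q p) (g : Sq → ℝ) :
    ∫ p, g p ∂(dens q) = ∫ p, q p * g p := by
  unfold dens
  rw [integral_withDensity_eq_integral_toReal_smul (by fun_prop) (by simp)]
  refine integral_congr_ae (Eventually.of_forall fun p => ?_)
  simp [ENNReal.toReal_ofReal (h0 p)]

lemma dens_prob {q : Sq → ℝ} (h0 : ∀ p, 0 ≤ q p) (hi : Integrable q)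
    (h1 : ∫ p, q p = 1) : IsProbabilityMeasure (dens q) := by
  constructor
  unfold dens
  rw [withDensity_apply _ MeasurableSet.univ, Measure.restrict_univ,
    ← ofReal_integral_eq_lintegral_ofReal hi (Eventually.of_forall h0), h1]
  simp

lemma dens_symm {q : Sq → ℝ} (hq : Measurable q) (hs : ∀ p : Sq, q p.swap = q p) :
    IsSymmSq (dens q) := by
  unfold IsSymmSq dens
  ext s hs'
  rw [Measure.map_apply measurable_swap hs', withDensity_apply _ (measurable_swap hs'),
    withDensity_apply _ hs']
  have hm : MeasurePreserving (Prod.swap : Sq → Sq) volume volume :=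
    Measure.measurePreserving_swap
  rw [← hm.setLIntegral_comp_preimage hs' (by fun_prop)]
  simp [hs]

/-- Bounded measurable functions are integrable for finite measures. -/
lemma integrable_of_bdd {X : Type*} [MeasurableSpace X] {μ : Measure X} [IsFiniteMeasure μ]
    {f : X → ℝ} (hf : Measurable f) (C : ℝ) (hC : ∀ x, |f x| ≤ C) : Integrable f μ :=
  Integrable.of_bound hf.aestronglyMeasurable C (Eventually.of_forall fun x => by
    simpa [Real.norm_eq_abs] using hC x)

instance (μ : SGraphon) : IsProbabilityMeasure μ.toMeasure := by
  unfold SGraphon.toMeasure; infer_instance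

lemma SGraphon.symm (μ : SGraphon) : IsSymmSq μ.toMeasure := μ.2

lemma SGraphon.ext' {μ ν : SGraphon} (h : μ.toMeasure = ν.toMeasure) : μ = ν :=
  Subtype.ext (Subtype.ext h)

/-- Build an s-graphon. -/
def SGraphon.mk' (μ : Measure Sq) (h1 : IsProbabilityMeasure μ) (h2 : IsSymmSq μ) : SGraphon :=
  ⟨⟨μ, h1⟩, h2⟩

instance : T2Space SGraphon :=
  inferInstanceAs (T2Space {μ : ProbabilityMeasure Sq // IsSymmSq (μ : Measure Sq)})

instance : CompactSpace SGraphon := by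
  have hc : IsClosed {μ : ProbabilityMeasure Sq | IsSymmSq (μ : Measure Sq)} := by
    have : {μ : ProbabilityMeasure Sq | IsSymmSq (μ : Measure Sq)} =
        {μ : ProbabilityMeasure Sq | μ.map (f := Prod.swap) (by fun_prop) = μ} := by
      ext μ
      exact ⟨fun h => Subtype.ext h, fun h => congrArg Subtype.val h⟩
    rw [this]
    exact isClosed_eq (ProbabilityMeasure.continuous_map continuous_swap) continuous_id
  exact isCompact_iff_compactSpace.mp hc.isCompact

lemma SGraphon.continuous_integral {g : Sq → ℝ} (hg : Continuous g) :
    Continuous fun ν : SGraphon => ∫ p, g p ∂ν.toMeasure := by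
  have := ProbabilityMeasure.continuous_integral_continuousMap (X := Sq) (⟨g, hg⟩ : C(Sq, ℝ))
  exact this.comp continuous_subtype_val

lemma SGraphon.tendsto_of_integral {ι : Type*} {l : Filter ι} {F : ι → SGraphon} {ν : SGraphon}
    (h : ∀ g : Sq → ℝ, Continuous g →
      Tendsto (fun i => ∫ p, g p ∂(F i).toMeasure) l (𝓝 (∫ p, g p ∂ν.toMeasure))) :
    Tendsto F l (𝓝 ν) := by
  refine tendsto_subtype_rng.mpr ?_
  refine ProbabilityMeasure.tendsto_iff_forall_integral_tendsto.mpr fun g => ?_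
  exact h g g.continuous

/-- Cluster point form of upper Vietoris convergence. -/
lemma mem_of_upper {X : Type*} [TopologicalSpace X] [RegularSpace X] {A : ℕ → Set X} {B : Set X}
    (hB : IsClosed B)
    (h : ∀ U : Set X, IsOpen U → B ⊆ U → ∀ᶠ n in atTop, A n ⊆ U)
    {l : Filter ℕ} [l.NeBot] (hl : l ≤ atTop) {x : ℕ → X} (hx : ∀ᶠ n in l, x n ∈ A n) {y : X}
    (hy : Tendsto x l (𝓝 y)) : y ∈ B := by
  by_contra hyB
  obtain ⟨U, W, hU, hW, hBU, hyW, hd⟩ :=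
    SeparatedNhds.of_isCompact_isClosed (isCompact_singleton (x := y)) hB
      (by simpa using hyB) |>.symm
  have h1 := hl (h U hU hBU)
  have h2 : ∀ᶠ n in l, x n ∈ W := hy (hW.mem_nhds (by simpa using hyW))
  obtain ⟨n, ⟨a, b⟩, c⟩ := ((Filter.Eventually.and h1 h2).and hx).exists
  exact Set.disjoint_left.mp hd (a c) b

lemma upper_of_mem {X : Type*} [TopologicalSpace X] {A : ℕ → Set X} {B K : Set X}
    (hK : IsCompact K) (hA : ∀ n, A n ⊆ K)
    (h : ∀ (l : Ultrafilter ℕ), (l : Filter ℕ) ≤ atTop → ∀ x : ℕ → X,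
      (∀ᶠ n in (l : Filter ℕ), x n ∈ A n) → ∀ y ∈ K, Tendsto x l (𝓝 y) → y ∈ B) :
    ∀ U : Set X, IsOpen U → B ⊆ U → ∀ᶠ n in atTop, A n ⊆ U := by
  intro U hU hBU
  by_contra hcon
  rw [Filter.not_eventually] at hcon
  obtain ⟨n0, hn0⟩ := hcon.exists
  obtain ⟨x0, hx0⟩ : ∃ x, x ∈ A n0 := by
    by_contra hh; push Not at hh; exact hn0 fun x hx => absurd hx (hh x)
  have hch : ∀ n, ∃ x, x ∈ K ∧ (¬ A n ⊆ U → x ∈ A n ∧ x ∉ U) := by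
    intro n
    by_cases hn : A n ⊆ U
    · exact ⟨x0, hA _ hx0, fun h => absurd hn h⟩
    · obtain ⟨x, hx, hxU⟩ := Set.not_subset.mp hn
      exact ⟨x, hA _ hx, fun _ => ⟨hx, hxU⟩⟩
  choose x hxK hx using hch
  have : (atTop ⊓ 𝓟 {n | ¬ A n ⊆ U}).NeBot := by
    rw [← Filter.frequently_mem_iff_neBot]; exact hcon
  let l := Ultrafilter.of (atTop ⊓ 𝓟 {n | ¬ A n ⊆ U})
  have hl : (l : Filter ℕ) ≤ atTop ⊓ 𝓟 {n | ¬ A n ⊆ U} := Ultrafilter.of_le _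
  have hl2 : ∀ᶠ n in (l : Filter ℕ), ¬ A n ⊆ U := (hl.trans inf_le_right) (mem_principal_self _)
  obtain ⟨y, hyK, hy⟩ := hK.ultrafilter_le_nhds (l.map x)
    (by rw [Ultrafilter.coe_map]; exact tendsto_principal.mpr (Eventually.of_forall hxK))
  have hy' : Tendsto x l (𝓝 y) := hy
  have hyB := h l (hl.trans inf_le_left) x (hl2.mono fun n hn => (hx n hn).1) y hyK hy'
  have h3 : ∀ᶠ n in (l : Filter ℕ), x n ∈ U := hy' (hU.mem_nhds (hBU hyB))
  obtain ⟨n, a, b⟩ := (h3.and hl2).exists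
  exact (hx n b).2 a

lemma IsFracPartition.le_one {k : ℕ} {F : Fin k → unitInterval → ℝ} (hF : IsFracPartition k F)
    (i : Fin k) (x : unitInterval) : F i x ≤ 1 := by
  rw [← hF.2.2.1 x]
  exact Finset.single_le_sum (f := fun i => F i x) (fun j _ => hF.2.1 j x) (Finset.mem_univ i)

lemma IsFracPartition.abs_le_one {k : ℕ} {F : Fin k → unitInterval → ℝ} (hF : IsFracPartition k F)
    (i : Fin k) (x : unitInterval) : |F i x| ≤ 1 := by
  rw [abs_of_nonneg (hF.2.1 i x)]; exact hF.le_one i x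

lemma abs_mul_le_one {a b : ℝ} (ha : |a| ≤ 1) (hb : |b| ≤ 1) : |a * b| ≤ 1 := by
  rw [abs_mul]; exact mul_le_one₀ ha (abs_nonneg _) hb

lemma IsFracPartition.measurable_fst {k : ℕ} {F : Fin k → unitInterval → ℝ}
    (hF : IsFracPartition k F) (i : Fin k) : Measurable fun p : Sq => F i p.1 :=
  (hF.1 i).comp _root_.measurable_fst

lemma IsFracPartition.measurable_snd {k : ℕ} {F : Fin k → unitInterval → ℝ}
    (hF : IsFracPartition k F) (i : Fin k) : Measurable fun p : Sq => F i p.2 :=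
  (hF.1 i).comp _root_.measurable_snd

lemma IsFracPartition.measurable_mul {k : ℕ} {F : Fin k → unitInterval → ℝ}
    (hF : IsFracPartition k F) (i j : Fin k) : Measurable fun p : Sq => F i p.1 * F j p.2 :=
  (hF.measurable_fst i).mul (hF.measurable_snd j)

lemma IsFracPartition.integrable_mul {k : ℕ} {F : Fin k → unitInterval → ℝ}
    (hF : IsFracPartition k F) (i j : Fin k) (μ : Measure Sq) [IsFiniteMeasure μ] :
    Integrable (fun p : Sq => F i p.1 * F j p.2) μ :=
  integrable_of_bdd (hF.measurable_mul i j) 1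
    fun _ => abs_mul_le_one (hF.abs_le_one _ _) (hF.abs_le_one _ _)

/-- The density matrix. -/
def Pmat {k : ℕ} (F : Fin k → unitInterval → ℝ) (μ : Measure Sq) : Matrix (Fin k) (Fin k) ℝ :=
  fun i j => ∫ p, F i p.1 * F j p.2 ∂μ

lemma Pmat_mem_Mstar {k : ℕ} {F : Fin k → unitInterval → ℝ} (hF : IsFracPartition k F)
    (μ : Measure Sq) [IsProbabilityMeasure μ] (hs : IsSymmSq μ) : Pmat F μ ∈ Mstar k := by
  refine ⟨?_, fun i j => integral_nonneg fun p => mul_nonneg (hF.2.1 _ _) (hF.2.1 _ _), ?_⟩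
  · ext i j
    simp only [Matrix.transpose_apply, Pmat]
    conv_lhs => rw [← hs]
    rw [integral_map measurable_swap.aemeasurable (hF.measurable_mul _ _).aestronglyMeasurable]
    simp [mul_comm]
  · have : ∑ i, ∑ j, Pmat F μ i j = ∫ p, ∑ i, ∑ j, F i p.1 * F j p.2 ∂μ := by
      rw [integral_finsetSum _ fun i _ => integrable_finsetSum _ fun j _ =>
        hF.integrable_mul i j μ]
      refine Finset.sum_congr rfl fun i _ => ?_
      rw [integral_finsetSum _ fun j _ => hF.integrable_mul i j μ]
      rfl
    rw [this]
    simp [← Finset.mul_sum, hF.2.2.1]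

lemma isClosed_Mstar (k : ℕ) : IsClosed (Mstar k) := by
  have h : ∀ i j, Continuous fun M : Matrix (Fin k) (Fin k) ℝ => M i j := fun i j => by fun_prop
  refine IsClosed.inter (isClosed_eq (by fun_prop) (by fun_prop)) (IsClosed.inter ?_ ?_)
  · have : {M : Matrix (Fin k) (Fin k) ℝ | ∀ i j, 0 ≤ M i j} = ⋂ i, ⋂ j, {M | 0 ≤ M i j} := by
      ext; simp
    change IsClosed {M : Matrix (Fin k) (Fin k) ℝ | ∀ i j, 0 ≤ M i j}
    rw [this]
    exact isClosed_iInter fun i => isClosed_iInter fun j =>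
      isClosed_le continuous_const (h i j)
  · exact isClosed_eq (by fun_prop) continuous_const

lemma Mstar_le_one {k : ℕ} {M : Matrix (Fin k) (Fin k) ℝ} (hM : M ∈ Mstar k) (i j : Fin k) :
    M i j ≤ 1 := by
  rw [← hM.2.2]
  calc M i j ≤ ∑ j, M i j :=
        Finset.single_le_sum (f := fun j => M i j) (fun j _ => hM.2.1 i j) (Finset.mem_univ j)
    _ ≤ _ := Finset.single_le_sum (f := fun i => ∑ j, M i j)
        (fun i _ => Finset.sum_nonneg fun j _ => hM.2.1 i j) (Finset.mem_univ i)

lemma isCompact_Mstar (k : ℕ) : IsCompact (Mstar k) := by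
  have h : IsCompact (Set.univ.pi fun _ : Fin k => Set.univ.pi fun _ : Fin k =>
      Set.Icc (0 : ℝ) 1) :=
    isCompact_univ_pi fun _ => isCompact_univ_pi fun _ => isCompact_Icc
  refine h.of_isClosed_subset (isClosed_Mstar k) fun M hM => ?_
  simp only [Set.mem_univ_pi]
  exact fun i j => ⟨hM.2.1 i j, Mstar_le_one hM i j⟩

lemma kShape_eq (μ : Measure Sq) (k : ℕ) :
    kShape μ k = closure {M | ∃ F, IsFracPartition k F ∧ M = Pmat F μ} := by
  unfold kShape
  congr 1
  ext M
  constructor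
  · rintro ⟨f, hf, h⟩
    exact ⟨f, hf, by ext i j; exact h i j⟩
  · rintro ⟨f, hf, h⟩
    exact ⟨f, hf, fun i j => by rw [h]; rfl⟩

lemma kShape_subset_Mstar (μ : SGraphon) (k : ℕ) : kShape μ.toMeasure k ⊆ Mstar k := by
  rw [kShape_eq]
  refine closure_minimal ?_ (isClosed_Mstar k)
  rintro M ⟨F, hF, rfl⟩
  exact Pmat_mem_Mstar hF _ μ.symm

lemma Pmat_continuous {k : ℕ} {h : Fin k → unitInterval → ℝ} (hc : ∀ i, Continuous (h i)) :
    Continuous fun ν : SGraphon => Pmat h ν.toMeasure := by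
  refine continuous_matrix fun i j => ?_
  exact SGraphon.continuous_integral (by have := hc i; have := hc j; fun_prop)

/-- density of `Q_h M`. -/
def qFn {k : ℕ} (h : Fin k → unitInterval → ℝ) (M : Matrix (Fin k) (Fin k) ℝ) (p : Sq) : ℝ :=
  (k : ℝ) ^ 2 * ∑ a, ∑ b, M a b * (h a p.1 * h b p.2)

lemma qFn_measurable {k : ℕ} {h : Fin k → unitInterval → ℝ} (hh : IsFracPartition k h)
    (M : Matrix (Fin k) (Fin k) ℝ) : Measurable (qFn h M) := by
  unfold qFn
  refine Measurable.const_mul (Finset.measurable_fun_sum _ fun a _ =>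
    Finset.measurable_fun_sum _ fun b _ => (hh.measurable_mul a b).const_mul _) _

lemma qFn_nonneg {k : ℕ} {h : Fin k → unitInterval → ℝ} (hh : IsFracPartition k h)
    {M : Matrix (Fin k) (Fin k) ℝ} (hM : M ∈ Mstar k) (p : Sq) : 0 ≤ qFn h M p :=
  mul_nonneg (by positivity) (Finset.sum_nonneg fun a _ => Finset.sum_nonneg fun b _ =>
    mul_nonneg (hM.2.1 a b) (mul_nonneg (hh.2.1 _ _) (hh.2.1 _ _)))

lemma qFn_integral {k : ℕ} {h : Fin k → unitInterval → ℝ} (hh : IsFracPartition k h)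
    (M : Matrix (Fin k) (Fin k) ℝ) {g : Sq → ℝ} (hg : Measurable g) (C : ℝ)
    (hC : ∀ p, |g p| ≤ C) :
    Integrable (fun p => qFn h M p * g p) ∧ ∫ p, qFn h M p * g p =
      (k : ℝ) ^ 2 * ∑ a, ∑ b, M a b * ∫ p : Sq, (h a p.1 * h b p.2) * g p := by
  have hI : ∀ a b, Integrable (fun p : Sq => (h a p.1 * h b p.2) * g p) := fun a b => by
    refine integrable_of_bdd ((hh.measurable_mul a b).mul hg) C fun p => ?_
    rw [abs_mul]
    calc _ ≤ 1 * |g p| := by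
          gcongr; exact abs_mul_le_one (hh.abs_le_one _ _) (hh.abs_le_one _ _)
      _ ≤ C := by rw [one_mul]; exact hC p
  have e : (fun p => qFn h M p * g p) =
      fun p => (k : ℝ) ^ 2 * ∑ a, ∑ b, M a b * ((h a p.1 * h b p.2) * g p) := by
    funext p
    simp only [qFn, mul_assoc, Finset.sum_mul]
  have hJ : ∀ a b, Integrable (fun p : Sq => M a b * ((h a p.1 * h b p.2) * g p)) :=
    fun a b => (hI a b).const_mul _
  have hJ' : ∀ a, Integrable (fun p : Sq => ∑ b, M a b * ((h a p.1 * h b p.2) * g p)) :=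
    fun a => integrable_finsetSum _ fun b _ => hJ a b
  rw [e]
  constructor
  · exact (integrable_finsetSum _ fun a _ => hJ' a).const_mul _
  · rw [integral_const_mul, integral_finsetSum _ fun a _ => hJ' a]
    congr 1
    refine Finset.sum_congr rfl fun a _ => ?_
    rw [integral_finsetSum _ fun b _ => hJ a b]
    exact Finset.sum_congr rfl fun b _ => integral_const_mul _ _

lemma prod_integral (f g : unitInterval → ℝ) :
    ∫ p : Sq, f p.1 * g p.2 = (∫ x, f x) * ∫ y, g y := by
  rw [Measure.volume_eq_prod]; exact integral_prod_mul f g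

lemma qFn_integral_one {k : ℕ} (hk : 0 < k) {h : Fin k → unitInterval → ℝ}
    (hh : IsFracPartition k h) {M : Matrix (Fin k) (Fin k) ℝ} (hM : M ∈ Mstar k) :
    Integrable (qFn h M) ∧ ∫ p, qFn h M p = 1 := by
  obtain ⟨h1, h2⟩ := qFn_integral hh M (g := fun _ => 1) measurable_const 1 (by simp)
  simp only [mul_one] at h1 h2
  refine ⟨h1, h2.trans ?_⟩
  have hk' : (k : ℝ) ≠ 0 := by positivity
  simp_rw [prod_integral, hh.2.2.2, ← Finset.sum_mul, hM.2.2]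
  field_simp

lemma qFn_swap {k : ℕ} (h : Fin k → unitInterval → ℝ) {M : Matrix (Fin k) (Fin k) ℝ}
    (hM : M ∈ Mstar k) (p : Sq) : qFn h M p.swap = qFn h M p := by
  unfold qFn
  congr 1
  rw [Finset.sum_comm]
  refine Finset.sum_congr rfl fun a _ => Finset.sum_congr rfl fun b _ => ?_
  rw [hM.1.apply]
  simp [mul_comm]

open scoped Classical in
/-- The map `Q_h`, totalized by a default value. -/
def Qmap {k : ℕ} (hk : 0 < k) (h : Fin k → unitInterval → ℝ) (hh : IsFracPartition k h)
    (d : SGraphon) (M : Matrix (Fin k) (Fin k) ℝ) : SGraphon :=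
  if hM : M ∈ Mstar k then
    SGraphon.mk' (dens (qFn h M))
      (dens_prob (qFn_nonneg hh hM) (qFn_integral_one hk hh hM).1 (qFn_integral_one hk hh hM).2)
      (dens_symm (qFn_measurable hh M) (qFn_swap h hM))
  else d

lemma Qmap_toMeasure {k : ℕ} (hk : 0 < k) {h : Fin k → unitInterval → ℝ}
    (hh : IsFracPartition k h) (d : SGraphon) {M : Matrix (Fin k) (Fin k) ℝ} (hM : M ∈ Mstar k) :
    (Qmap hk h hh d M).toMeasure = dens (qFn h M) := by
  unfold Qmap; rw [dif_pos hM]; rfl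

lemma exists_abs_bound {g : Sq → ℝ} (hg : Continuous g) : ∃ C, ∀ p, |g p| ≤ C := by
  obtain ⟨C, hC⟩ := (isCompact_range hg.abs).bddAbove
  exact ⟨C, fun p => hC ⟨p, rfl⟩⟩

lemma Qmap_integral {k : ℕ} (hk : 0 < k) {h : Fin k → unitInterval → ℝ}
    (hh : IsFracPartition k h) (d : SGraphon) {M : Matrix (Fin k) (Fin k) ℝ} (hM : M ∈ Mstar k)
    {g : Sq → ℝ} (hg : Continuous g) :
    ∫ p, g p ∂(Qmap hk h hh d M).toMeasure =
      (k : ℝ) ^ 2 * ∑ a, ∑ b, M a b * ∫ p : Sq, (h a p.1 * h b p.2) * g p := by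
  obtain ⟨C, hC⟩ := exists_abs_bound hg
  rw [Qmap_toMeasure hk hh d hM, dens_integral (qFn_measurable hh M) (qFn_nonneg hh hM),
    (qFn_integral hh M hg.measurable C hC).2]

lemma Qmap_continuousOn {k : ℕ} (hk : 0 < k) {h : Fin k → unitInterval → ℝ}
    (hh : IsFracPartition k h) (d : SGraphon) : ContinuousOn (Qmap hk h hh d) (Mstar k) := by
  intro M hM
  refine SGraphon.tendsto_of_integral fun g hg => ?_
  rw [Qmap_integral hk hh d hM hg]
  have : Continuous fun M : Matrix (Fin k) (Fin k) ℝ =>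
      (k : ℝ) ^ 2 * ∑ a, ∑ b, M a b * ∫ p : Sq, (h a p.1 * h b p.2) * g p := by fun_prop
  refine Tendsto.congr' ?_ (this.continuousWithinAt (s := Mstar k) (x := M))
  filter_upwards [self_mem_nhdsWithin] with N hN
  rw [Qmap_integral hk hh d hN hg]

/-- Renormalizing a non-negative vector to have sum one. -/
def renorm {k : ℕ} (g : Fin k → ℝ) (i : Fin k) : ℝ :=
  g i / max (∑ j, g j) 1 + (1 - (∑ j, g j) / max (∑ j, g j) 1) / k

lemma renorm_nonneg {k : ℕ} (g : Fin k → ℝ) (hg : ∀ i, 0 ≤ g i) (i : Fin k) :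
    0 ≤ renorm g i := by
  unfold renorm
  have h1 : (0 : ℝ) < max (∑ j, g j) 1 := lt_max_of_lt_right one_pos
  have h2 : (∑ j, g j) / max (∑ j, g j) 1 ≤ 1 := (div_le_one h1).mpr (le_max_left _ _)
  have := hg i
  have h3 : 0 ≤ 1 - (∑ j, g j) / max (∑ j, g j) 1 := by linarith
  positivity

lemma renorm_sum {k : ℕ} (hk : 0 < k) (g : Fin k → ℝ) : ∑ i, renorm g i = 1 := by
  unfold renorm
  have hk' : (k : ℝ) ≠ 0 := by positivity
  rw [Finset.sum_add_distrib, ← Finset.sum_div, Finset.sum_const, Finset.card_univ,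
    Fintype.card_fin, nsmul_eq_mul]
  field_simp
  ring

lemma renorm_sub_le {k : ℕ} (hk : 0 < k) (g F : Fin k → ℝ) (hg : ∀ i, 0 ≤ g i)
    (hF : ∑ i, F i = 1) (i : Fin k) : |renorm g i - F i| ≤ 2 * ∑ j, |g j - F j| := by
  have hS : |∑ j, g j - 1| ≤ ∑ j, |g j - F j| := by
    rw [← hF, ← Finset.sum_sub_distrib]; exact Finset.abs_sum_le_sum_abs _ _
  have hi : |g i - F i| ≤ ∑ j, |g j - F j| :=
    Finset.single_le_sum (f := fun j => |g j - F j|) (fun j _ => abs_nonneg _) (Finset.mem_univ i)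
  have hgi : g i ≤ ∑ j, g j :=
    Finset.single_le_sum (f := fun j => g j) (fun j _ => hg j) (Finset.mem_univ i)
  have h0 := hg i
  have hk1 : (1 : ℝ) ≤ k := by exact_mod_cast hk
  have key : |renorm g i - g i| ≤ |∑ j, g j - 1| := by
    unfold renorm
    generalize (∑ j, g j) = S at *
    rcases le_total S 1 with h | h
    · rw [max_eq_right h, div_one, div_one, add_sub_cancel_left, abs_of_nonpos (by linarith : S - 1 ≤ 0),
        abs_of_nonneg (by apply div_nonneg <;> linarith)]
      rw [neg_sub]
      exact div_le_self (by linarith) hk1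
    · have hS0 : S ≠ 0 := by linarith
      rw [max_eq_left h, div_self hS0, sub_self, zero_div, add_zero, abs_sub_comm,
        abs_of_nonneg (sub_nonneg.mpr (div_le_self h0 h)), abs_of_nonneg (by linarith)]
      have e : g i - g i / S = (g i / S) * (S - 1) := by field_simp
      rw [e]
      have : g i / S ≤ 1 := (div_le_one (by linarith)).mpr hgi
      nlinarith
  have := abs_sub_le (renorm g i) (g i) (F i)
  linarith

lemma frac_approx {k : ℕ} (hk : 0 < k) {F : Fin k → unitInterval → ℝ} (hF : IsFracPartition k F)
    (ρ : Measure unitInterval) [IsFiniteMeasure ρ] {ε : ℝ} (hε : 0 < ε) :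
    ∃ h : Fin k → unitInterval → ℝ, IsFracPartition k h ∧ (∀ i, Continuous (h i)) ∧
      ∀ i, ∫ x, |h i x - F i x| ∂ρ ≤ ε := by
  set ρ' := ρ + volume with hρ'
  set R : ℝ := ρ'.real Set.univ with hR
  have hR0 : 0 ≤ R := measureReal_nonneg
  have hk0 : (0 : ℝ) < k := by exact_mod_cast hk
  set e : ℝ := min (1 / k) (ε / (1 + 2 * k * R)) with he
  have hden : 0 < 1 + 2 * k * R := by positivity
  have he0 : 0 < e := lt_min (by positivity) (by positivity)
  have hke : k * e ≤ 1 := by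
    have : e ≤ 1 / k := min_le_left _ _
    calc k * e ≤ k * (1 / k) := by gcongr
      _ = 1 := by field_simp
  have heε : e * (1 + 2 * k * R) ≤ ε := by
    have : e ≤ ε / (1 + 2 * k * R) := min_le_right _ _
    exact (le_div_iff₀ hden).mp this
  have hFint : ∀ i, Integrable (F i) ρ' := fun i =>
    integrable_of_bdd (hF.1 i) 1 (hF.abs_le_one i)
  have hex : ∀ i, ∃ g : unitInterval → ℝ, Continuous g ∧ ∫ x, |F i x - g x| ∂ρ' ≤ e / (2 * k) := by
    intro i
    obtain ⟨g, hg, -⟩ := (hFint i).exists_boundedContinuous_integral_sub_le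
      (ε := e / (2 * k)) (by positivity)
    exact ⟨g, g.continuous, by simpa [Real.norm_eq_abs] using hg⟩
  choose g hgc hg using hex
  set gp : unitInterval → Fin k → ℝ := fun x i => max (g i x) 0 with hgp
  set g' : Fin k → unitInterval → ℝ := fun i x => renorm (gp x) i with hg'
  have hgpc : ∀ i, Continuous fun x => gp x i := fun i => (hgc i).max continuous_const
  have hg'c : ∀ i, Continuous (g' i) := by
    intro i
    have hs : Continuous fun x => ∑ j, gp x j := continuous_finsetSum _ fun j _ => hgpc j
    have hm : Continuous fun x => max (∑ j, gp x j) 1 := hs.max continuous_const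
    have hne : ∀ x, max (∑ j, gp x j) 1 ≠ 0 := fun x =>
      (lt_max_of_lt_right one_pos : (0 : ℝ) < _).ne'
    exact ((hgpc i).div hm hne).add ((continuous_const.sub (hs.div hm hne)).div_const _)
  have hg'0 : ∀ i x, 0 ≤ g' i x := fun i x => renorm_nonneg _ (fun j => le_max_right _ _) i
  have hg's : ∀ x, ∑ i, g' i x = 1 := fun x => renorm_sum hk _
  have hg'1 : ∀ i x, g' i x ≤ 1 := fun i x => by
    rw [← hg's x]
    exact Finset.single_le_sum (f := fun i => g' i x) (fun j _ => hg'0 j x) (Finset.mem_univ i)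
  have hcint : ∀ (f : unitInterval → ℝ), Continuous f → ∀ (m : Measure unitInterval)
      [IsFiniteMeasure m], Integrable f m := fun f hf m _ => by
    obtain ⟨C, hC⟩ := (isCompact_range hf.abs).bddAbove
    exact integrable_of_bdd hf.measurable C fun x => hC ⟨x, rfl⟩
  have habs : ∀ i, Integrable (fun x => |F i x - g i x|) ρ' := fun i =>
    ((hFint i).sub (hcint _ (hgc i) ρ')).abs
  have hg'F : ∀ i, ∫ x, |g' i x - F i x| ∂ρ' ≤ e := by
    intro i
    calc ∫ x, |g' i x - F i x| ∂ρ' ≤ ∫ x, 2 * ∑ j, |F j x - g j x| ∂ρ' := by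
          refine integral_mono (((hcint _ (hg'c i) ρ').sub (hFint i)).abs)
            ((integrable_finsetSum _ fun j _ => habs j).const_mul _) fun x => ?_
          refine (renorm_sub_le hk (gp x) (fun j => F j x) (fun j => le_max_right _ _)
            (hF.2.2.1 x) i).trans ?_
          refine mul_le_mul_of_nonneg_left (Finset.sum_le_sum fun j _ => ?_) (by norm_num)
          have h0 := hF.2.1 j x
          simp only [hgp]
          rcases le_total (g j x) 0 with h | h
          · rw [max_eq_right h, abs_of_nonpos (by linarith), abs_of_nonneg (by linarith)]
            linarith
          · rw [max_eq_left h, abs_sub_comm]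
      _ = 2 * ∑ j, ∫ x, |F j x - g j x| ∂ρ' := by
          rw [integral_const_mul, integral_finsetSum _ fun j _ => habs j]
      _ ≤ 2 * ∑ j : Fin k, e / (2 * k) := by gcongr with j; exact hg j
      _ = e := by
          rw [Finset.sum_const, Finset.card_univ, Fintype.card_fin, nsmul_eq_mul]
          field_simp
  have hdiff : ∀ i, Integrable (fun x => |g' i x - F i x|) ρ' := fun i =>
    ((hcint _ (hg'c i) ρ').sub (hFint i)).abs
  set a : Fin k → ℝ := fun i => ∫ x, g' i x with ha
  have haF : ∀ i, a i ≤ 1 / k + e := by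
    intro i
    have h1 : a i - 1 / k = ∫ x, (g' i x - F i x) := by
      rw [integral_sub (hcint _ (hg'c i) _) (integrable_of_bdd (hF.1 i) 1 (hF.abs_le_one i)),
        hF.2.2.2 i]
    have h2 : ∫ x, (g' i x - F i x) ≤ ∫ x, |g' i x - F i x| :=
      (le_abs_self _).trans (abs_integral_le_integral_abs)
    have h3 : ∫ x, |g' i x - F i x| ≤ ∫ x, |g' i x - F i x| ∂ρ' :=
      integral_mono_measure (by rw [hρ']; exact Measure.le_add_left le_rfl)
        (Eventually.of_forall fun x => abs_nonneg _) (hdiff i)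
    have := hg'F i
    linarith
  have has : ∑ i, a i = 1 := by
    simp only [ha]
    rw [← integral_finsetSum _ fun i _ => hcint _ (hg'c i) _]
    simp [hg's]
  set t : ℝ := k * e with ht
  have ht0 : 0 ≤ t := by positivity
  set d : Fin k → ℝ := fun i => 1 / k - (1 - t) * a i with hd
  have hd0 : ∀ i, 0 ≤ d i := by
    intro i
    have h1 : (1 - t) * a i ≤ (1 - t) * (1 / k + e) :=
      mul_le_mul_of_nonneg_left (haF i) (by linarith)
    have h2 : (1 - t) * (1 / k + e) = 1 / k - t * e := by
      rw [ht]; field_simp; ring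
    have h3 : 0 ≤ t * e := by positivity
    simp only [hd]; linarith
  have hds : ∑ i, d i = t := by
    simp only [hd]
    rw [Finset.sum_sub_distrib, ← Finset.mul_sum, has, Finset.sum_const, Finset.card_univ,
      Fintype.card_fin, nsmul_eq_mul]
    field_simp; ring
  have hdt : ∀ i, d i ≤ t := fun i => by
    rw [← hds]
    exact Finset.single_le_sum (f := d) (fun j _ => hd0 j) (Finset.mem_univ i)
  refine ⟨fun i x => (1 - t) * g' i x + d i, ⟨?_, ?_, ?_, ?_⟩, ?_, ?_⟩
  · exact fun i => ((hg'c i).measurable.const_mul _).add_const _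
  · exact fun i x => add_nonneg (mul_nonneg (by linarith) (hg'0 i x)) (hd0 i)
  · intro x
    rw [Finset.sum_add_distrib, ← Finset.mul_sum, hg's, hds]; ring
  · intro i
    rw [integral_add ((hcint _ (hg'c i) _).const_mul _) (integrable_const _), integral_const_mul]
    simp [hd, ha]
  · exact fun i => (continuous_const.mul (hg'c i)).add continuous_const
  · intro i
    have hI : Integrable (fun x => |(1 - t) * g' i x + d i - F i x|) ρ' :=
      ((((hcint _ (hg'c i) _).const_mul _).add (integrable_const _)).sub (hFint i)).abs
    calc ∫ x, |(1 - t) * g' i x + d i - F i x| ∂ρ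
        ≤ ∫ x, |(1 - t) * g' i x + d i - F i x| ∂ρ' :=
          integral_mono_measure (by rw [hρ']; exact Measure.le_add_right le_rfl)
            (Eventually.of_forall fun x => abs_nonneg _) hI
      _ ≤ ∫ x, (|g' i x - F i x| + 2 * t) ∂ρ' := by
          refine integral_mono hI ((hdiff i).add (integrable_const _)) fun x => ?_
          have e1 : (1 - t) * g' i x + d i - F i x = (g' i x - F i x) + (d i - t * g' i x) := by
            ring
          have e2 : |d i - t * g' i x| ≤ 2 * t := by
            have h1 := hg'0 i x
            have h2 := hg'1 i x
            have h3 := hd0 i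
            have h4 := hdt i
            rw [abs_le]; constructor <;> nlinarith
          simp only [e1]
          exact (abs_add_le _ _).trans (by linarith)
      _ = ∫ x, |g' i x - F i x| ∂ρ' + R * (2 * t) := by
          rw [integral_add (hdiff i) (integrable_const _), integral_const, smul_eq_mul]
      _ ≤ e + R * (2 * t) := by gcongr; exact hg'F i
      _ = e * (1 + 2 * k * R) := by rw [ht]; ring
      _ ≤ ε := heε

lemma Pmat_sub_le {k : ℕ} {F h : Fin k → unitInterval → ℝ} (hF : IsFracPartition k F)
    (hh : IsFracPartition k h) (μ : Measure Sq) [IsFiniteMeasure μ] {ε : ℝ}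
    (hε : ∀ i, ∫ x, |h i x - F i x| ∂(μ.map Prod.fst + μ.map Prod.snd) ≤ ε) (i j : Fin k) :
    |Pmat h μ i j - Pmat F μ i j| ≤ 2 * ε := by
  have hm : ∀ i, Measurable fun x => |h i x - F i x| := fun i => ((hh.1 i).sub (hF.1 i)).abs
  have hb : ∀ i x, |(|h i x - F i x|)| ≤ 2 := fun i x => by
    rw [abs_abs]
    have := abs_sub (h i x) (F i x)
    have := hh.abs_le_one i x
    have := hF.abs_le_one i x
    linarith
  have hi : ∀ i (m : Measure unitInterval) [IsFiniteMeasure m],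
      Integrable (fun x => |h i x - F i x|) m := fun i m _ => integrable_of_bdd (hm i) 2 (hb i)
  have h1 : ∀ i, ∫ p, |h i p.1 - F i p.1| ∂μ ≤ ε := fun i => by
    refine le_trans ?_ (hε i)
    rw [integral_add_measure (hi i _) (hi i _),
      integral_map _root_.measurable_fst.aemeasurable (hm i).aestronglyMeasurable]
    exact le_add_of_nonneg_right (integral_nonneg fun _ => abs_nonneg _)
  have h2 : ∀ i, ∫ p, |h i p.2 - F i p.2| ∂μ ≤ ε := fun i => by
    refine le_trans ?_ (hε i)
    rw [integral_add_measure (hi i _) (hi i _), add_comm,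
      integral_map _root_.measurable_snd.aemeasurable (hm i).aestronglyMeasurable]
    exact le_add_of_nonneg_right (integral_nonneg fun _ => abs_nonneg _)
  have hi1 : Integrable (fun p : Sq => |h i p.1 - F i p.1|) μ :=
    integrable_of_bdd ((hm i).comp _root_.measurable_fst) 2 fun p => hb i p.1
  have hi2 : Integrable (fun p : Sq => |h j p.2 - F j p.2|) μ :=
    integrable_of_bdd ((hm j).comp _root_.measurable_snd) 2 fun p => hb j p.2
  unfold Pmat
  rw [← integral_sub (hh.integrable_mul i j μ) (hF.integrable_mul i j μ)]
  calc |∫ p, (h i p.1 * h j p.2 - F i p.1 * F j p.2) ∂μ|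
      ≤ ∫ p, |h i p.1 * h j p.2 - F i p.1 * F j p.2| ∂μ := abs_integral_le_integral_abs
    _ ≤ ∫ p, (|h i p.1 - F i p.1| + |h j p.2 - F j p.2|) ∂μ := by
        refine integral_mono ((hh.integrable_mul i j μ).sub (hF.integrable_mul i j μ)).abs
          (hi1.add hi2) fun p => ?_
        have e : h i p.1 * h j p.2 - F i p.1 * F j p.2 =
          (h i p.1 - F i p.1) * h j p.2 + F i p.1 * (h j p.2 - F j p.2) := by ring
        simp only [e]
        refine (abs_add_le _ _).trans ?_
        rw [abs_mul, abs_mul]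
        exact add_le_add (mul_le_of_le_one_right (abs_nonneg _) (hh.abs_le_one _ _))
          (mul_le_of_le_one_left (abs_nonneg _) (hF.abs_le_one _ _))
    _ = ∫ p, |h i p.1 - F i p.1| ∂μ + ∫ p, |h j p.2 - F j p.2| ∂μ := integral_add hi1 hi2
    _ ≤ 2 * ε := by linarith [h1 i, h2 j]

lemma kShape_subset_closure (μ : Measure Sq) [IsFiniteMeasure μ] {k : ℕ} (hk : 0 < k) :
    kShape μ k ⊆
      closure {M | ∃ F, IsFracPartition k F ∧ (∀ i, Continuous (F i)) ∧ M = Pmat F μ} := by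
  rw [kShape_eq]
  refine closure_minimal ?_ isClosed_closure
  rintro M ⟨F, hF, rfl⟩
  choose h hh hc hle using fun n : ℕ => frac_approx hk hF (μ.map Prod.fst + μ.map Prod.snd)
    (ε := 1 / ((n : ℝ) + 1)) (by positivity)
  refine mem_closure_of_tendsto (f := fun n => Pmat (h n) μ) (b := atTop) ?_
    (Eventually.of_forall fun n => ⟨h n, hh n, hc n, rfl⟩)
  refine tendsto_pi_nhds.mpr fun i => tendsto_pi_nhds.mpr fun j => ?_
  rw [tendsto_iff_dist_tendsto_zero]
  refine squeeze_zero (fun _ => dist_nonneg)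
    (fun n => Pmat_sub_le hF (hh n) μ (hle n) i j) ?_
  simpa using tendsto_one_div_add_atTop_nhds_zero_nat.const_mul (2 : ℝ)

lemma kernel_fd {k : ℕ} (hk : 0 < k) {F h : Fin k → unitInterval → ℝ} (hF : IsFracPartition k F)
    (hh : IsFracPartition k h) :
    FairlyDistributed fun p : Sq => (k : ℝ) * ∑ a, F a p.1 * h a p.2 := by
  have hk' : (k : ℝ) ≠ 0 := by positivity
  constructor
  · exact (Finset.measurable_fun_sum _ fun a _ =>
      (hF.measurable_fst a).mul (hh.measurable_snd a)).const_mul _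
  · exact fun p => mul_nonneg (by positivity) (Finset.sum_nonneg fun a _ =>
      mul_nonneg (hF.2.1 _ _) (hh.2.1 _ _))
  · refine ⟨k * 1, fun p => ?_⟩
    gcongr
    rw [← hF.2.2.1 p.1]
    gcongr with a
    exact mul_le_of_le_one_right (hF.2.1 _ _) (hh.le_one _ _)
  · intro x
    simp only
    rw [integral_const_mul, integral_finsetSum _ fun a _ =>
      (integrable_of_bdd (hh.1 a) 1 (hh.abs_le_one a)).const_mul _]
    simp_rw [integral_const_mul, hh.2.2.2, ← Finset.sum_mul, hF.2.2.1]
    field_simp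
  · intro x
    simp only
    rw [integral_const_mul, integral_finsetSum _ fun a _ =>
      (integrable_of_bdd (hF.1 a) 1 (hF.abs_le_one a)).mul_const _]
    simp_rw [integral_mul_const, hF.2.2.2, ← Finset.mul_sum, hh.2.2.1]
    field_simp

lemma phi_kernel {k : ℕ} {F h : Fin k → unitInterval → ℝ} (hF : IsFracPartition k F)
    (μ : Measure Sq) [IsFiniteMeasure μ] (p : Sq) :
    phiFn (fun p : Sq => (k : ℝ) * ∑ a, F a p.1 * h a p.2) μ p = qFn h (Pmat F μ) p := by
  unfold phiFn qFn
  have e : (fun q : Sq => ((k : ℝ) * ∑ a, F a q.1 * h a p.1) *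
      ((k : ℝ) * ∑ a, F a q.2 * h a p.2)) =
      fun q => (k : ℝ) ^ 2 * ∑ a, ∑ b, (F a q.1 * F b q.2) * (h a p.1 * h b p.2) := by
    funext q
    rw [mul_mul_mul_comm, Finset.sum_mul_sum, sq]
    congr 1
    refine Finset.sum_congr rfl fun a _ => Finset.sum_congr rfl fun b _ => by ring
  have hJ : ∀ a b, Integrable (fun q : Sq => (F a q.1 * F b q.2) * (h a p.1 * h b p.2)) μ :=
    fun a b => (hF.integrable_mul a b μ).mul_const _
  have hJ' : ∀ a, Integrable (fun q : Sq => ∑ b, (F a q.1 * F b q.2) * (h a p.1 * h b p.2)) μ :=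
    fun a => integrable_finsetSum _ fun b _ => hJ a b
  simp only at e ⊢
  rw [e, integral_const_mul, integral_finsetSum _ fun a _ => hJ' a]
  congr 1
  refine Finset.sum_congr rfl fun a _ => ?_
  rw [integral_finsetSum _ fun b _ => hJ a b]
  exact Finset.sum_congr rfl fun b _ => integral_mul_const _ _

lemma Qmap_mem_shape {k : ℕ} (hk : 0 < k) {h : Fin k → unitInterval → ℝ}
    (hh : IsFracPartition k h) (hc : ∀ i, Continuous (h i)) (d μ : SGraphon)
    {M : Matrix (Fin k) (Fin k) ℝ} (hM : M ∈ kShape μ.toMeasure k) :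
    Qmap hk h hh d M ∈ shape μ := by
  have hM' := kShape_subset_Mstar μ k hM
  have hM2 := kShape_subset_closure μ.toMeasure hk hM
  have hsub : {M | ∃ F, IsFracPartition k F ∧ (∀ i, Continuous (F i)) ∧ M = Pmat F μ.toMeasure} ⊆
      Mstar k := by
    rintro M ⟨F, hF, -, rfl⟩
    exact Pmat_mem_Mstar hF _ μ.symm
  have := ((Qmap_continuousOn hk hh d M hM').mono hsub).mem_closure_image hM2
  refine closure_mono ?_ this
  rintro _ ⟨_, ⟨F, hF, hFc, rfl⟩, rfl⟩
  refine ⟨fun p : Sq => (k : ℝ) * ∑ a, F a p.1 * h a p.2, kernel_fd hk hF hh, ?_, ?_⟩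
  · fun_prop
  · rw [Qmap_toMeasure hk hh d (Pmat_mem_Mstar hF _ μ.symm)]
    unfold dens PhiMeas
    simp_rw [phi_kernel hF]

lemma exists_seq_approx {k : ℕ} (hk : 0 < k) {F : Fin k → unitInterval → ℝ}
    (hF : IsFracPartition k F) (μ : Measure Sq) [IsFiniteMeasure μ] :
    ∃ h : ℕ → Fin k → unitInterval → ℝ, (∀ n, IsFracPartition k (h n)) ∧
      (∀ n i, Continuous (h n i)) ∧ Tendsto (fun n => Pmat (h n) μ) atTop (𝓝 (Pmat F μ)) := by
  choose h hh hc hle using fun n : ℕ => frac_approx hk hF (μ.map Prod.fst + μ.map Prod.snd)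
    (ε := 1 / ((n : ℝ) + 1)) (by positivity)
  refine ⟨h, hh, hc, ?_⟩
  refine tendsto_pi_nhds.mpr fun i => tendsto_pi_nhds.mpr fun j => ?_
  rw [tendsto_iff_dist_tendsto_zero]
  refine squeeze_zero (fun _ => dist_nonneg)
    (fun n => Pmat_sub_le hF (hh n) μ (hle n) i j) ?_
  simpa using tendsto_one_div_add_atTop_nhds_zero_nat.const_mul (2 : ℝ)

lemma phiFn_measurable {f : Sq → ℝ} (hf : FairlyDistributed f) (μ : Measure Sq)
    [IsFiniteMeasure μ] : Measurable (phiFn f μ) := by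
  unfold phiFn
  have hm := hf.measurable
  have : Measurable fun z : Sq × Sq => f (z.2.1, z.1.1) * f (z.2.2, z.1.2) := by fun_prop
  exact (this.stronglyMeasurable.integral_prod_right (ν := μ)).measurable

lemma phiFn_nonneg {f : Sq → ℝ} (hf : FairlyDistributed f) (μ : Measure Sq) (p : Sq) :
    0 ≤ phiFn f μ p :=
  integral_nonneg fun _ => mul_nonneg (hf.nonneg _) (hf.nonneg _)

/-- Push a fractional partition through a fairly distributed function. -/
def pushF {k : ℕ} (h : Fin k → unitInterval → ℝ) (f : Sq → ℝ) (i : Fin k) (x : unitInterval) : ℝ :=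
  ∫ u, f (x, u) * h i u

lemma pushF_frac {k : ℕ} {h : Fin k → unitInterval → ℝ} (hh : IsFracPartition k h)
    {f : Sq → ℝ} (hf : FairlyDistributed f) : IsFracPartition k (pushF h f) := by
  have hm := hf.measurable
  obtain ⟨C, hC⟩ := hf.bounded
  have hmm : ∀ i, Measurable fun p : Sq => f p * h i p.2 := fun i => hm.mul (hh.measurable_snd i)
  have hbd : ∀ i (p : Sq), |f p * h i p.2| ≤ C := fun i p => by
    rw [abs_mul, abs_of_nonneg (hf.nonneg p)]
    exact (mul_le_of_le_one_right (hf.nonneg p) (hh.abs_le_one _ _)).trans (hC p)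
  refine ⟨fun i => ?_, fun i x => ?_, fun x => ?_, fun i => ?_⟩
  · exact ((hmm i).stronglyMeasurable.integral_prod_right (ν := volume)).measurable
  · exact integral_nonneg fun u => mul_nonneg (hf.nonneg _) (hh.2.1 _ _)
  · unfold pushF
    have hJ : ∀ i, Integrable (fun u => f (x, u) * h i u) := fun i => integrable_of_bdd
      ((hmm i).comp measurable_prodMk_left) C fun u => hbd i (x, u)
    rw [← integral_finsetSum _ fun i _ => hJ i]
    simp_rw [← Finset.mul_sum, hh.2.2.1, mul_one]
    exact hf.row x
  · unfold pushF
    rw [integral_integral_swap (f := fun x u => f (x, u) * h i u)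
      (integrable_of_bdd (hmm i) C (hbd i))]
    simp_rw [integral_mul_const, hf.col, one_mul]
    exact hh.2.2.2 i

lemma Pmat_phi {k : ℕ} {h : Fin k → unitInterval → ℝ} (hh : IsFracPartition k h)
    {f : Sq → ℝ} (hf : FairlyDistributed f) (μ : Measure Sq) [IsFiniteMeasure μ] :
    Pmat h (PhiMeas f μ) = Pmat (pushF h f) μ := by
  ext i j
  have hm := hf.measurable
  obtain ⟨C, hC⟩ := hf.bounded
  have hC' : ∀ p, |f p| ≤ C := fun p => by rw [abs_of_nonneg (hf.nonneg p)]; exact hC p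
  have hC0 : 0 ≤ C := (hf.nonneg (0, 0)).trans (hC _)
  change ∫ p, h i p.1 * h j p.2 ∂(dens (phiFn f μ)) = _
  rw [dens_integral (phiFn_measurable hf μ) (phiFn_nonneg hf μ)]
  have e1 : ∀ p : Sq, phiFn f μ p * (h i p.1 * h j p.2) =
      ∫ q, (f (q.1, p.1) * f (q.2, p.2)) * (h i p.1 * h j p.2) ∂μ := fun p => by
    rw [integral_mul_const]; rfl
  simp_rw [e1]
  have hi := hh.1 i
  have hj := hh.1 j
  rw [integral_integral_swap (f := fun p q : Sq =>
    (f (q.1, p.1) * f (q.2, p.2)) * (h i p.1 * h j p.2))]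
  · unfold Pmat
    refine integral_congr_ae (Eventually.of_forall fun q => ?_)
    simp only [pushF]
    rw [← prod_integral]
    refine integral_congr_ae (Eventually.of_forall fun p => ?_)
    simp only
    ring
  · refine integrable_of_bdd (by simp only [Function.uncurry_def]; fun_prop) (C * C) fun z => ?_
    simp only [Function.uncurry_def]
    rw [abs_mul, abs_mul]
    have h1 := abs_mul_le_one (hh.abs_le_one i z.1.1) (hh.abs_le_one j z.1.2)
    have h2 := mul_le_mul (hC' (z.2.1, z.1.1)) (hC' (z.2.2, z.1.2)) (abs_nonneg _) hC0
    exact (mul_le_of_le_one_right (by positivity) h1).trans h2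

lemma Pmat_mem_kShape {k : ℕ} {h : Fin k → unitInterval → ℝ} (hh : IsFracPartition k h)
    (hc : ∀ i, Continuous (h i)) (μ : SGraphon) {ν : SGraphon} (hν : ν ∈ shape μ) :
    Pmat h ν.toMeasure ∈ kShape μ.toMeasure k := by
  rw [kShape_eq]
  have h1 : Pmat h ν.toMeasure ∈ closure ((fun ν : SGraphon => Pmat h ν.toMeasure) ''
      {ν : SGraphon | ∃ f : Sq → ℝ, FairlyDistributed f ∧ Continuous f ∧
        ν.toMeasure = PhiMeas f μ.toMeasure}) :=
    image_closure_subset_closure_image (Pmat_continuous hc) ⟨ν, hν, rfl⟩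
  refine closure_mono ?_ h1
  rintro _ ⟨ν', ⟨f, hf, -, hν'⟩, rfl⟩
  exact ⟨pushF h f, pushF_frac hh hf, by simp only [hν']; exact Pmat_phi hh hf _⟩

lemma gridIdx_measurable (k : ℕ) (hk : 0 < k) : Measurable (gridIdx k hk) := by
  have h1 : Measurable fun u : unitInterval => ⌊(u : ℝ) * k⌋₊ := by fun_prop
  have h2 : Measurable fun n : ℕ => (⟨min n (k - 1),
    lt_of_le_of_lt (min_le_right _ _) (Nat.sub_lt hk one_pos)⟩ : Fin k) := measurable_from_top
  exact h2.comp h1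

lemma gridIdx_volume (k : ℕ) (hk : 0 < k) (i : Fin k) :
    volume.real {u | gridIdx k hk u = i} = 1 / k := by
  have hk0 : (0 : ℝ) < k := by exact_mod_cast hk
  have hi1 : ((i : ℕ) : ℝ) + 1 ≤ k := by exact_mod_cast i.2
  have ha : ((i : ℕ) : ℝ) / k ∈ unitInterval :=
    ⟨by positivity, by rw [div_le_one hk0]; linarith⟩
  have hb : (((i : ℕ) : ℝ) + 1) / k ∈ unitInterval :=
    ⟨by positivity, by rw [div_le_one hk0]; linarith⟩
  have s1 : Set.Ico (⟨_, ha⟩ : unitInterval) ⟨_, hb⟩ ⊆ {u | gridIdx k hk u = i} := by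
    rintro u ⟨h1, h2⟩
    have h1' : ((i : ℕ) : ℝ) ≤ u * k := (div_le_iff₀ hk0).mp h1
    have h2' : (u : ℝ) * k < (i : ℕ) + 1 := (lt_div_iff₀ hk0).mp h2
    have : ⌊(u : ℝ) * k⌋₊ = i := by
      rw [Nat.floor_eq_iff (mul_nonneg u.2.1 hk0.le)]; exact ⟨h1', h2'⟩
    apply Fin.ext
    simp only [gridIdx, this]
    have := i.2
    omega
  have s2 : {u | gridIdx k hk u = i} ⊆ Set.Icc (⟨_, ha⟩ : unitInterval) ⟨_, hb⟩ := by
    intro u hu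
    have hu' : min ⌊(u : ℝ) * k⌋₊ (k - 1) = i := congrArg Fin.val hu
    have hle : (i : ℕ) ≤ ⌊(u : ℝ) * k⌋₊ := by rw [← hu']; exact min_le_left _ _
    have h1 : ((i : ℕ) : ℝ) ≤ u * k :=
      (Nat.cast_le.mpr hle).trans (Nat.floor_le (mul_nonneg u.2.1 hk0.le))
    have h2 : (u : ℝ) * k ≤ (i : ℕ) + 1 := by
      rcases le_total ⌊(u : ℝ) * k⌋₊ (k - 1) with h | h
      · rw [min_eq_left h] at hu'
        rw [← hu']
        exact (Nat.lt_floor_add_one _).le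
      · rw [min_eq_right h] at hu'
        have : ((i : ℕ) : ℝ) + 1 = k := by
          have : (i : ℕ) + 1 = k := by omega
          exact_mod_cast this
        rw [this]
        exact mul_le_of_le_one_left hk0.le u.2.2
    exact ⟨(div_le_iff₀ hk0).mpr h1, (le_div_iff₀ hk0).mpr h2⟩
  have e : (((i : ℕ) : ℝ) + 1) / k - ((i : ℕ) : ℝ) / k = 1 / k := by ring
  have m1 := measure_mono (μ := volume) s1
  have m2 := measure_mono (μ := volume) s2
  rw [unitInterval.volume_Ico] at m1
  rw [unitInterval.volume_Icc] at m2
  simp only [e] at m1 m2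
  rw [measureReal_def, le_antisymm m2 m1, ENNReal.toReal_ofReal (by positivity)]

/-- The partition into grid intervals. -/
def gridPart (k : ℕ) (hk : 0 < k) (i : Fin k) (u : unitInterval) : ℝ :=
  if gridIdx k hk u = i then 1 else 0

lemma gridPart_frac (k : ℕ) (hk : 0 < k) : IsFracPartition k (gridPart k hk) := by
  have hm : ∀ i, MeasurableSet {u | gridIdx k hk u = i} := fun i =>
    gridIdx_measurable k hk (measurableSet_singleton i)
  refine ⟨fun i => Measurable.ite (hm i) measurable_const measurable_const, fun i x => ?_,
    fun x => ?_, fun i => ?_⟩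
  · unfold gridPart; split_ifs <;> norm_num
  · simp [gridPart]
  · have : gridPart k hk i = Set.indicator {u | gridIdx k hk u = i} (fun _ => (1 : ℝ)) := by
      funext u; simp [gridPart, Set.indicator]
    rw [this, integral_indicator (hm i)]
    simp [gridIdx_volume]

lemma muM_eq {k : ℕ} (hk : 0 < k) (M : Matrix (Fin k) (Fin k) ℝ) :
    muM M = dens (qFn (gridPart k hk) M) := by
  unfold muM dens
  rw [dif_pos hk]
  congr 1
  funext p
  simp [qFn, gridPart]

lemma normAdj_mem {m : ℕ} (G : SimpleGraph (Fin m)) (h : ∃ i j, G.Adj i j) :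
    normAdj G ∈ Mstar m := by
  have h0 : ∀ i j, 0 ≤ adjMat G i j := fun i j => by unfold adjMat; split_ifs <;> norm_num
  obtain ⟨i, j, hij⟩ := h
  have hpos : 0 < ∑ i, ∑ j, adjMat G i j := by
    refine Finset.sum_pos' (fun i _ => Finset.sum_nonneg fun j _ => h0 i j)
      ⟨i, Finset.mem_univ _, Finset.sum_pos' (fun j _ => h0 i j) ⟨j, Finset.mem_univ _, ?_⟩⟩
    simp [adjMat, hij]
  refine ⟨?_, fun i j => ?_, ?_⟩
  · ext i j
    have : adjMat G j i = adjMat G i j := by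
      unfold adjMat
      by_cases h : G.Adj i j
      · rw [if_pos h.symm, if_pos h]
      · rw [if_neg (fun h2 => h (SimpleGraph.Adj.symm h2)), if_neg h]
    simp only [normAdj, Matrix.transpose_apply, Matrix.smul_apply, this]
  · simp only [normAdj, Matrix.smul_apply, smul_eq_mul]
    exact mul_nonneg (inv_nonneg.mpr hpos.le) (h0 i j)
  · simp only [normAdj, Matrix.smul_apply, smul_eq_mul, ← Finset.mul_sum]
    exact inv_mul_cancel₀ hpos.ne'

lemma exists_graphon {m : ℕ} (G : SimpleGraph (Fin m)) (h : ∃ i j, G.Adj i j) :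
    ∃ γ : SGraphon, γ.toMeasure = muM (normAdj G) := by
  have hm : 0 < m := h.choose.pos
  have hM := normAdj_mem G h
  have hg := gridPart_frac m hm
  refine ⟨SGraphon.mk' (dens (qFn (gridPart m hm) (normAdj G)))
      (dens_prob (qFn_nonneg hg hM) (qFn_integral_one hm hg hM).1 (qFn_integral_one hm hg hM).2)
      (dens_symm (qFn_measurable hg _) (qFn_swap _ hM)), ?_⟩
  rw [muM_eq hm]
  rfl

/-- Fixed `k`: `P_h Q_h M → M` as `h` approaches the grid partition. -/
lemma exists_PQ_tendsto {k : ℕ} (hk : 0 < k) (d : SGraphon) :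
    ∃ (h : ℕ → Fin k → unitInterval → ℝ) (hh : ∀ n, IsFracPartition k (h n)),
      (∀ n i, Continuous (h n i)) ∧ ∀ M ∈ Mstar k,
      Tendsto (fun n => Pmat (h n) (Qmap hk (h n) (hh n) d M).toMeasure) atTop (𝓝 M) := by
  have hk' : (k : ℝ) ≠ 0 := by positivity
  let D : Measure Sq := (volume : Measure unitInterval).map fun x => (x, x)
  have hdm : Measurable fun x : unitInterval => (x, x) := by fun_prop
  have : IsFiniteMeasure D := by infer_instance
  obtain ⟨h, hh, hc, ht⟩ := exists_seq_approx hk (gridPart_frac k hk) D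
  have hPD : ∀ (F : Fin k → unitInterval → ℝ), IsFracPartition k F → ∀ a b,
      Pmat F D a b = ∫ x, F a x * F b x := fun F hF a b => by
    unfold Pmat
    rw [integral_map hdm.aemeasurable (hF.measurable_mul a b).aestronglyMeasurable]
  have hlim : Pmat (gridPart k hk) D = fun a b => if a = b then 1 / (k : ℝ) else 0 := by
    ext a b
    rw [hPD _ (gridPart_frac k hk)]
    split_ifs with hab
    · rw [← (gridPart_frac k hk).2.2.2 a, hab]
      refine integral_congr_ae (Eventually.of_forall fun x => ?_)
      simp [gridPart]
    · rw [← integral_zero unitInterval ℝ (μ := volume)]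
      refine integral_congr_ae (Eventually.of_forall fun x => ?_)
      simp only [gridPart]
      split_ifs with h1 h2
      · exact absurd (h1.symm.trans h2) hab
      all_goals simp
  refine ⟨h, hh, hc, fun M hM => ?_⟩
  refine tendsto_pi_nhds.mpr fun i => tendsto_pi_nhds.mpr fun j => ?_
  have e : ∀ n, Pmat (h n) (Qmap hk (h n) (hh n) d M).toMeasure i j =
      (k : ℝ) ^ 2 * ∑ a, ∑ b, M a b * (Pmat (h n) D a i * Pmat (h n) D b j) := fun n => by
    unfold Pmat
    rw [Qmap_integral hk (hh n) d hM (by have := hc n i; have := hc n j; fun_prop)]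
    congr 1
    refine Finset.sum_congr rfl fun a _ => Finset.sum_congr rfl fun b _ => ?_
    congr 1
    have h1 := hPD _ (hh n) a i
    have h2 := hPD _ (hh n) b j
    unfold Pmat at h1 h2
    rw [h1, h2, ← prod_integral]
    refine integral_congr_ae (Eventually.of_forall fun p => ?_)
    simp only
    ring
  simp_rw [e]
  have hcont : Continuous fun A : Matrix (Fin k) (Fin k) ℝ =>
      (k : ℝ) ^ 2 * ∑ a, ∑ b, M a b * (A a i * A b j) := by fun_prop
  have := (hcont.tendsto _).comp ht
  have e2 : (k : ℝ) ^ 2 * ∑ a, ∑ b, M a b *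
      (Pmat (gridPart k hk) D a i * Pmat (gridPart k hk) D b j) = M i j := by
    rw [hlim]
    simp
    field_simp
  rw [e2] at this
  exact this

/-- The clamp function. -/
def clampF (x : ℝ) : ℝ := max 0 x - max 0 (x - 1)

lemma clampF_nonneg (x : ℝ) : 0 ≤ clampF x := by
  unfold clampF
  exact sub_nonneg.mpr (max_le_max le_rfl (by linarith))

lemma clampF_le_one (x : ℝ) : clampF x ≤ 1 := by
  unfold clampF
  rcases max_cases 0 x with h | h <;> rcases max_cases 0 (x - 1) with h' | h' <;> linarith

lemma clampF_mono {x y : ℝ} (h : x ≤ y) : clampF x ≤ clampF y := by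
  unfold clampF
  rcases max_cases 0 x with h1 | h1 <;> rcases max_cases 0 (x - 1) with h2 | h2 <;>
  rcases max_cases 0 y with h3 | h3 <;> rcases max_cases 0 (y - 1) with h4 | h4 <;> linarith

lemma clampF_zero {x : ℝ} (h : x ≤ 0) : clampF x = 0 := by
  unfold clampF; rw [max_eq_left h, max_eq_left (by linarith)]; simp

lemma clampF_one {x : ℝ} (h : 1 ≤ x) : clampF x = 1 := by
  unfold clampF; rw [max_eq_right (by linarith), max_eq_right (by linarith)]; ring

lemma clampF_continuous : Continuous clampF := by unfold clampF; fun_prop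

lemma integral_pos_part (K c : ℝ) (hK : 0 < K) (h0 : 0 ≤ c) (h1 : c ≤ K) :
    ∫ u : unitInterval, max 0 (K * (u : ℝ) - c) = (K - c) ^ 2 / (2 * K) := by
  have e : ∫ u : unitInterval, max 0 (K * (u : ℝ) - c) =
      ∫ x in (0 : ℝ)..1, max 0 (K * x - c) := by
    rw [intervalIntegral.integral_of_le zero_le_one, ← integral_Icc_eq_integral_Ioc]
    exact unitInterval.measurePreserving_coe.integral_comp
      unitInterval.measurableEmbedding_coe (fun x : ℝ => max 0 (K * x - c))
  have hcont : Continuous fun x : ℝ => max 0 (K * x - c) := by fun_prop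
  have hc1 : c / K ≤ 1 := (div_le_one hK).mpr h1
  have hc0 : 0 ≤ c / K := by positivity
  rw [e, ← intervalIntegral.integral_add_adjacent_intervals (b := c / K)
    (hcont.intervalIntegrable _ _) (hcont.intervalIntegrable _ _)]
  have i1 : ∫ x in (0 : ℝ)..(c / K), max 0 (K * x - c) = 0 := by
    rw [intervalIntegral.integral_congr (g := fun _ => (0 : ℝ))]
    · simp
    · intro x hx
      rw [Set.uIcc_of_le hc0] at hx
      have := (le_div_iff₀ hK).mp hx.2
      exact max_eq_left (by linarith)
  have i2 : ∫ x in (c / K)..1, max 0 (K * x - c) = ∫ x in (c / K)..1, (K * x - c) := by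
    refine intervalIntegral.integral_congr ?_
    intro x hx
    rw [Set.uIcc_of_le hc1] at hx
    have := (div_le_iff₀ hK).mp hx.1
    exact max_eq_right (by linarith)
  rw [i1, i2, intervalIntegral.integral_sub (by apply Continuous.intervalIntegrable; fun_prop)
    (by simp), intervalIntegral.integral_const_mul, integral_id]
  simp
  field_simp
  ring

/-- Ramp functions. -/
def ramp (k i : ℕ) (u : unitInterval) : ℝ :=
  if i = 0 then 1 else if k ≤ i then 0 else clampF (k * (u : ℝ) - i + 1 / 2)

lemma ramp_continuous (k i : ℕ) : Continuous (ramp k i) := by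
  unfold ramp
  split_ifs
  · exact continuous_const
  · exact continuous_const
  · exact clampF_continuous.comp (by fun_prop)

lemma ramp_nonneg (k i : ℕ) (u : unitInterval) : 0 ≤ ramp k i u := by
  unfold ramp; split_ifs
  · norm_num
  · norm_num
  · exact clampF_nonneg _

lemma ramp_succ_le (k i : ℕ) (u : unitInterval) : ramp k (i + 1) u ≤ ramp k i u := by
  unfold ramp
  rw [if_neg (Nat.succ_ne_zero i)]
  split_ifs
  · norm_num
  · norm_num
  · exact clampF_nonneg _
  · exact clampF_le_one _
  · omega
  · apply clampF_mono; push_cast; linarith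

lemma ramp_integral (k i : ℕ) (hk : 0 < k) (hi : i ≤ k) :
    ∫ u, ramp k i u = 1 - (i : ℝ) / k := by
  have hk0 : (0 : ℝ) < k := by exact_mod_cast hk
  unfold ramp
  split_ifs with h1 h2
  · simp [h1]
  · have : i = k := le_antisymm hi h2
    subst this
    simp [hk0.ne']
  · have hi1 : (1 : ℝ) ≤ i := by exact_mod_cast Nat.one_le_iff_ne_zero.mpr h1
    have hi2 : (i : ℝ) + 1 ≤ k := by exact_mod_cast (by omega : i + 1 ≤ k)
    unfold clampF
    have hInt : ∀ c : ℝ, Integrable fun u : unitInterval => max 0 (k * (u : ℝ) - c) := fun c => by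
      have hcont : Continuous fun u : unitInterval => max 0 (k * (u : ℝ) - c) := by fun_prop
      obtain ⟨C, hC⟩ := (isCompact_range hcont.abs).bddAbove
      exact integrable_of_bdd hcont.measurable C fun x => hC ⟨x, rfl⟩
    have e : (fun u : unitInterval => max 0 (k * (u : ℝ) - i + 1 / 2) -
        max 0 (k * (u : ℝ) - i + 1 / 2 - 1)) = fun u : unitInterval =>
        max 0 (k * (u : ℝ) - (i - 1 / 2)) - max 0 (k * (u : ℝ) - (i + 1 / 2)) := by
      funext u
      congr 2 <;> ring
    rw [e, integral_sub (hInt _) (hInt _),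
      integral_pos_part k _ hk0 (by linarith) (by linarith),
      integral_pos_part k _ hk0 (by linarith) (by linarith)]
    field_simp
    ring

/-- The continuous partition with small supports. -/
def tent (k : ℕ) (i : Fin k) (u : unitInterval) : ℝ := ramp k i u - ramp k (i + 1) u

lemma tent_continuous (k : ℕ) (i : Fin k) : Continuous (tent k i) :=
  (ramp_continuous k i).sub (ramp_continuous k (i + 1))

lemma tent_frac (k : ℕ) (hk : 0 < k) : IsFracPartition k (tent k) := by
  refine ⟨fun i => (tent_continuous k i).measurable,
    fun i x => sub_nonneg.mpr (ramp_succ_le k i x), fun x => ?_, fun i => ?_⟩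
  · unfold tent
    rw [Fin.sum_univ_eq_sum_range (fun i => ramp k i x - ramp k (i + 1) x) k,
      Finset.sum_range_sub']
    simp [ramp, hk.ne']
  · unfold tent
    have hInt : ∀ i, Integrable (ramp k i) := fun i => by
      obtain ⟨C, hC⟩ := (isCompact_range (ramp_continuous k i).abs).bddAbove
      exact integrable_of_bdd (ramp_continuous k i).measurable C fun x => hC ⟨x, rfl⟩
    rw [integral_sub (hInt _) (hInt _), ramp_integral k _ hk i.2.le, ramp_integral k _ hk i.2]
    push_cast
    ring

lemma tent_support {k : ℕ} (hk : 0 < k) (i : Fin k) (u : unitInterval) (h : tent k i u ≠ 0) :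
    |(u : ℝ) - ((i : ℕ) + 1 / 2) / k| ≤ 1 / k := by
  have hk0 : (0 : ℝ) < k := by exact_mod_cast hk
  have hu0 : 0 ≤ k * (u : ℝ) := mul_nonneg hk0.le u.2.1
  have hu1 : k * (u : ℝ) ≤ k := mul_le_of_le_one_right hk0.le u.2.2
  have key : |k * (u : ℝ) - ((i : ℕ) + 1 / 2)| ≤ 1 := by
    by_contra hcon
    apply h
    refine le_antisymm ?_ ((tent_frac k hk).2.1 i u)
    rw [not_le, lt_abs] at hcon
    unfold tent
    rcases hcon with h1 | h1
    · have : ramp k (i + 1) u = 1 := by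
        unfold ramp
        rw [if_neg (Nat.succ_ne_zero _), if_neg, clampF_one]
        · push_cast; linarith
        · intro hle
          have : (k : ℝ) ≤ (i : ℕ) + 1 := by exact_mod_cast hle
          linarith
      rw [this]
      have : ramp k i u ≤ 1 := by
        unfold ramp; split_ifs
        · norm_num
        · norm_num
        · exact clampF_le_one _
      linarith
    · have h3 : (i : ℕ) ≠ 0 := by
        intro h0
        rw [h0] at h1
        push_cast at h1
        linarith
      have : ramp k i u = 0 := by
        unfold ramp
        rw [if_neg h3, if_neg (not_le.mpr i.2), clampF_zero]
        linarith
      rw [this]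
      have h4 : 0 ≤ ramp k (i + 1) u := ramp_nonneg _ _ _
      linarith
  have e : (u : ℝ) - ((i : ℕ) + 1 / 2) / k = (k * (u : ℝ) - ((i : ℕ) + 1 / 2)) / k := by
    field_simp
  rw [e, abs_div, abs_of_pos hk0]
  gcongr

lemma tent_int_close {k : ℕ} (hk : 0 < k) {g : Sq → ℝ} (hg : Continuous g) {ε δ : ℝ}
    (hδ : ∀ p q : Sq, dist p q < δ → |g p - g q| ≤ ε) (hkδ : 1 / (k : ℝ) < δ)
    (a b : Fin k) :
    ∃ c : ℝ, ∀ (m : Measure Sq) [IsFiniteMeasure m],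
      |∫ p, (tent k a p.1 * tent k b p.2) * g p ∂m - c * Pmat (tent k) m a b| ≤
        ε * Pmat (tent k) m a b := by
  have hk0 : (0 : ℝ) < k := by exact_mod_cast hk
  have hT := tent_frac k hk
  have hc : ∀ i : Fin k, (((i : ℕ) : ℝ) + 1 / 2) / k ∈ unitInterval := fun i => by
    have : ((i : ℕ) : ℝ) + 1 ≤ k := by exact_mod_cast i.2
    exact ⟨by positivity, by rw [div_le_one hk0]; linarith⟩
  let c : Sq := (⟨_, hc a⟩, ⟨_, hc b⟩)
  refine ⟨g c, fun m _ => ?_⟩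
  obtain ⟨C, hC⟩ := exists_abs_bound hg
  have hw := hT.integrable_mul a b m
  have hwg : Integrable (fun p : Sq => (tent k a p.1 * tent k b p.2) * g p) m := by
    refine integrable_of_bdd ((hT.measurable_mul a b).mul hg.measurable) C fun p => ?_
    rw [abs_mul]
    calc _ ≤ 1 * |g p| := by
          gcongr; exact abs_mul_le_one (hT.abs_le_one _ _) (hT.abs_le_one _ _)
      _ ≤ C := by rw [one_mul]; exact hC p
  unfold Pmat
  rw [← integral_const_mul, ← integral_const_mul, ← integral_sub hwg (hw.const_mul _)]
  refine abs_integral_le_integral_abs.trans ?_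
  refine integral_mono (hwg.sub (hw.const_mul _)).abs (hw.const_mul _) fun p => ?_
  have hw0 : 0 ≤ tent k a p.1 * tent k b p.2 := mul_nonneg (hT.2.1 _ _) (hT.2.1 _ _)
  simp only
  rw [mul_comm (g c), ← mul_sub, abs_mul, abs_of_nonneg hw0, mul_comm ε]
  by_cases hz : tent k a p.1 * tent k b p.2 = 0
  · simp [hz]
  · have h1 := tent_support hk a p.1 (left_ne_zero_of_mul hz)
    have h2 := tent_support hk b p.2 (right_ne_zero_of_mul hz)
    refine mul_le_mul_of_nonneg_left (hδ _ _ ?_) hw0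
    rw [Prod.dist_eq]
    exact max_lt (lt_of_le_of_lt h1 hkδ) (lt_of_le_of_lt h2 hkδ)

lemma QP_tendsto (d ν : SGraphon) :
    Tendsto (fun n : ℕ => Qmap n.succ_pos (tent (n + 1)) (tent_frac (n + 1) n.succ_pos) d
      (Pmat (tent (n + 1)) ν.toMeasure)) atTop (𝓝 ν) := by
  refine SGraphon.tendsto_of_integral fun g hg => ?_
  rw [Metric.tendsto_atTop]
  intro ε hε
  obtain ⟨δ, hδ0, hδ⟩ := Metric.uniformContinuous_iff.mp
    (CompactSpace.uniformContinuous_of_continuous hg) (ε / 3) (by positivity)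
  obtain ⟨N, hN⟩ := exists_nat_one_div_lt hδ0
  refine ⟨N, fun n hn => ?_⟩
  set k := n + 1 with hkdef
  have hk : 0 < k := n.succ_pos
  have hk0 : (0 : ℝ) < k := by exact_mod_cast hk
  have hkδ : 1 / (k : ℝ) < δ := by
    refine lt_of_le_of_lt ?_ hN
    have : (N : ℝ) + 1 ≤ k := by rw [hkdef]; push_cast; gcongr
    gcongr
  have hT := tent_frac k hk
  have hP := Pmat_mem_Mstar hT ν.toMeasure ν.symm
  choose c hc using tent_int_close hk hg (ε := ε / 3) (fun p q h => (hδ h).le) hkδ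
  rw [Qmap_integral hk hT d hP hg]
  obtain ⟨C, hC⟩ := exists_abs_bound hg
  have hwg : ∀ a b, Integrable (fun p : Sq => (tent k a p.1 * tent k b p.2) * g p) ν.toMeasure := by
    intro a b
    refine integrable_of_bdd ((hT.measurable_mul a b).mul hg.measurable) C fun p => ?_
    rw [abs_mul]
    calc _ ≤ 1 * |g p| := by
          gcongr; exact abs_mul_le_one (hT.abs_le_one _ _) (hT.abs_le_one _ _)
      _ ≤ C := by rw [one_mul]; exact hC p
  have e : ∫ p, g p ∂ν.toMeasure =
      ∑ a, ∑ b, ∫ p, (tent k a p.1 * tent k b p.2) * g p ∂ν.toMeasure := by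
    have : ∀ a, ∑ b, ∫ p, (tent k a p.1 * tent k b p.2) * g p ∂ν.toMeasure =
        ∫ p, ∑ b, (tent k a p.1 * tent k b p.2) * g p ∂ν.toMeasure := fun a =>
      (integral_finsetSum _ fun b _ => hwg a b).symm
    simp_rw [this]
    rw [← integral_finsetSum _ fun a _ => integrable_finsetSum _ fun b _ => hwg a b]
    refine integral_congr_ae (Eventually.of_forall fun p => ?_)
    simp only [← Finset.sum_mul, ← Finset.mul_sum, hT.2.2.1, mul_one, one_mul]
  rw [e, Real.dist_eq, Finset.mul_sum, ← Finset.sum_sub_distrib]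
  have hvol : ∀ a b, Pmat (tent k) volume a b = 1 / k * (1 / k) := fun a b => by
    unfold Pmat
    rw [prod_integral, hT.2.2.2, hT.2.2.2]
  calc _ ≤ ∑ a, ∑ b, (2 * (ε / 3)) * Pmat (tent k) ν.toMeasure a b := by
        refine (Finset.abs_sum_le_sum_abs _ _).trans (Finset.sum_le_sum fun a _ => ?_)
        rw [Finset.mul_sum, ← Finset.sum_sub_distrib]
        refine (Finset.abs_sum_le_sum_abs _ _).trans (Finset.sum_le_sum fun b _ => ?_)
        have h1 := hc a b ν.toMeasure
        have h2 := hc a b volume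
        rw [hvol] at h2
        have hP0 : 0 ≤ Pmat (tent k) ν.toMeasure a b := hP.2.1 a b
        generalize Pmat (tent k) ν.toMeasure a b = P at *
        generalize ∫ p, (tent k a p.1 * tent k b p.2) * g p ∂ν.toMeasure = X at *
        generalize ∫ p : Sq, (tent k a p.1 * tent k b p.2) * g p = Y at *
        have h3 : |(k : ℝ) ^ 2 * Y - c a b| ≤ ε / 3 := by
          have : (k : ℝ) ^ 2 * Y - c a b = (k : ℝ) ^ 2 * (Y - c a b * (1 / k * (1 / k))) := by
            field_simp
          rw [this, abs_mul, abs_of_pos (by positivity)]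
          calc _ ≤ (k : ℝ) ^ 2 * (ε / 3 * (1 / k * (1 / k))) := by gcongr
            _ = ε / 3 := by field_simp
        have h4 : (k : ℝ) ^ 2 * (P * Y) - X = P * ((k : ℝ) ^ 2 * Y - c a b) - (X - c a b * P) := by
          ring
        rw [h4]
        refine (abs_sub _ _).trans ?_
        rw [abs_mul, abs_of_nonneg hP0]
        have := mul_le_mul_of_nonneg_left h3 hP0
        linarith
    _ = 2 * (ε / 3) := by
        simp_rw [← Finset.mul_sum]
        rw [hP.2.2, mul_one]
    _ < ε := by linarith

instance (k : ℕ) : RegularSpace (Matrix (Fin k) (Fin k) ℝ) :=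
  inferInstanceAs (RegularSpace (Fin k → Fin k → ℝ))

lemma main_equiv (γ : ℕ → SGraphon) (μ : SGraphon) :
    (∀ k : ℕ, 0 < k →
      VietorisTendsto (fun n => kShape (γ n).toMeasure k) (kShape μ.toMeasure k)) ↔
    VietorisTendsto (fun n => shape (γ n)) (shape μ) := by
  constructor
  · intro H
    constructor
    · refine upper_of_mem isCompact_univ (fun n => Set.subset_univ _) ?_
      intro l hl x hx y _ hy
      refine isClosed_closure.mem_of_tendsto (QP_tendsto μ y) (Eventually.of_forall fun m => ?_)
      refine Qmap_mem_shape _ _ (tent_continuous _) _ _ ?_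
      refine mem_of_upper isClosed_closure (H (m + 1) m.succ_pos).1 hl
        (x := fun n => Pmat (tent (m + 1)) (x n).toMeasure) ?_
        (((Pmat_continuous (tent_continuous _)).tendsto y).comp hy)
      exact hx.mono fun n hn => Pmat_mem_kShape (tent_frac _ m.succ_pos) (tent_continuous _) _ hn
    · rintro U hU ⟨ν, hν, hνU⟩
      obtain ⟨m, hm⟩ := ((QP_tendsto μ ν).eventually (hU.mem_nhds hνU)).exists
      have hT := tent_frac (m + 1) m.succ_pos
      have hP := Pmat_mem_kShape hT (tent_continuous _) μ hν
      have hc := Qmap_continuousOn m.succ_pos hT μ _ (kShape_subset_Mstar μ _ hP)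
      have hmem := hc (hU.mem_nhds hm)
      obtain ⟨W, hW, hPW, hWs⟩ := mem_nhdsWithin.mp hmem
      filter_upwards [(H (m + 1) m.succ_pos).2 W hW ⟨_, hP, hPW⟩] with n hn
      obtain ⟨M, hM, hMW⟩ := hn
      exact ⟨_, Qmap_mem_shape m.succ_pos hT (tent_continuous _) μ _ hM,
        hWs ⟨hMW, kShape_subset_Mstar _ _ hM⟩⟩
  · intro H k hk
    obtain ⟨h, hh, hc, hPQ⟩ := exists_PQ_tendsto hk μ
    constructor
    · refine upper_of_mem (isCompact_Mstar k) (fun n => kShape_subset_Mstar _ k) ?_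
      intro l hl x hx y hyK hy
      refine isClosed_closure.mem_of_tendsto (hPQ y hyK) (Eventually.of_forall fun m => ?_)
      refine Pmat_mem_kShape (hh m) (hc m) μ ?_
      refine mem_of_upper isClosed_closure H.1 hl
        (x := fun n => Qmap hk (h m) (hh m) μ (x n)) ?_ ?_
      · exact hx.mono fun n hn => Qmap_mem_shape hk (hh m) (hc m) _ _ hn
      · have := Qmap_continuousOn hk (hh m) μ y hyK
        refine Tendsto.comp this (tendsto_nhdsWithin_iff.mpr ⟨hy, ?_⟩)
        exact hx.mono fun n hn => kShape_subset_Mstar _ _ hn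
    · rintro U hU ⟨M, hM, hMU⟩
      obtain ⟨m, hm⟩ := ((hPQ M (kShape_subset_Mstar _ _ hM)).eventually
        (hU.mem_nhds hMU)).exists
      filter_upwards [H.2 _ (hU.preimage (Pmat_continuous (hc m)))
        ⟨_, Qmap_mem_shape hk (hh m) (hc m) μ μ hM, hm⟩] with n hn
      obtain ⟨ν, hν, hνU⟩ := hn
      exact ⟨_, Pmat_mem_kShape (hh m) (hc m) _ hν, hνU⟩


/-- Corollary `cor:graphs`. A sequence of finite graphs `Gₙ` (each with a
non-empty edge set) is s-convergent to an s-graphon `μ` (i.e. for every `k`, the `k`-shapes of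
`μ_{Ã_{Gₙ}}` converge to `C(μ,k)` in the Vietoris topology) if and only if the shapes
`C(Gₙ) = C(μ_{Ã_{Gₙ}})` converge to `C(μ)` in the Vietoris topology on compact subsets of the
space of s-graphons. -/
theorem stmt5 (V : ℕ → ℕ) (G : ∀ n, SimpleGraph (Fin (V n)))
    (hE : ∀ n, ∃ i j, (G n).Adj i j) (μ : SGraphon) :
    (∀ k : ℕ, 0 < k →
      VietorisTendsto (fun n => kShape (muM (normAdj (G n))) k) (kShape μ.toMeasure k)) ↔
    VietorisTendsto (fun n => shapeM (muM (normAdj (G n)))) (shape μ) := by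
  choose γ hγ using fun n => exists_graphon (G n) (hE n)
  have key := main_equiv γ μ
  simp only [shape, hγ] at key
  simpa only [shape] using key

end
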